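/- For all n, m ≥ 0 and generic tuples ū=(u_1,…,u_n), v̄=(v_1,…,v_m), the multiple action of the modified operator ν_{21} on a modified Bethe vector is ν_{21}(ū) ν_{12}(v̄) |0⟩ = Σ_{w̄ ⇒ {w̄_I, w̄_II, w̄_III}} (−β_1)^{n−l_I}(−β_2)^{n−l_II} λ_2(w̄_I)·λ_1(w̄_II)·K^{(1)}_{n,l_I}(ū | w̄_I + c)·\bar{K}^{(1)}_{n,l_II}(ū | w̄_II − c)·f(w̄_I, w̄_II)·f(w̄_I, w̄_III)·f(w̄_III, w̄_II)·ν_{12}(w̄_III) |0⟩, where w̄ = {ū, v̄}, the sum runs over all partitions of w̄ into three disjoint subtuples with no restriction on cardinalities, l_I = #w̄_I, and l_II = #w̄_II. -/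

import Mathlib

open scoped BigOperators

noncomputable section

/-- The rational function `g(u,v) = c/(u-v)`. -/
def gC (c u v : ℂ) : ℂ := c / (u - v)

/-- The rational function `f(u,v) = (u-v+c)/(u-v)`. -/
def fC (c u v : ℂ) : ℂ := (u - v + c) / (u - v)

/-- The rational function `h(u,v) = (u-v+c)/c`. -/
def hC (c u v : ℂ) : ℂ := (u - v + c) / c

/-- A family of parameters is generic if all pairwise differences avoid `0, ±c, ±2c`. -/
def Generic (c : ℂ) {ι : Type*} (w : ι → ℂ) : Prop :=
  ∀ i j, i ≠ j → w i - w j ≠ 0 ∧ w i - w j ≠ c ∧ w i - w j ≠ -c ∧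
    w i - w j ≠ 2 * c ∧ w i - w j ≠ -2 * c

/-- The modified Izergin determinant `K^{(z)}(x̄|ȳ)`. -/
def KIz (c z : ℂ) {ι κ : Type*} [Fintype ι] [Fintype κ] [DecidableEq κ]
    (x : ι → ℂ) (y : κ → ℂ) : ℂ :=
  Matrix.det (Matrix.of fun j k : κ =>
    -z * (if j = k then 1 else 0) +
      (∏ i, fC c (x i) (y j)) * (∏ i ∈ Finset.univ.erase j, fC c (y j) (y i))
        / hC c (y j) (y k))

/-- The conjugated modified Izergin determinant: `c` is replaced by `-c`. -/
def KIzBar (c z : ℂ) {ι κ : Type*} [Fintype ι] [Fintype κ] [DecidableEq κ]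
    (x : ι → ℂ) (y : κ → ℂ) : ℂ :=
  KIz (-c) z x y

/-- Restriction of a tuple to a subtuple indexed by a `Finset`. -/
def restr {p : ℕ} (w : Fin p → ℂ) (s : Finset (Fin p)) : {x // x ∈ s} → ℂ :=
  fun i => w i.1

/-- Double product `f(w̄_s, w̄_t)` over two subtuples of a tuple. -/
def fSS (c : ℂ) {p : ℕ} (w : Fin p → ℂ) (s t : Finset (Fin p)) : ℂ :=
  ∏ i ∈ s, ∏ j ∈ t, fC c (w i) (w j)

/-- Ordered product of operators over a subtuple (the operators pairwise commute,
so the order is irrelevant). -/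
def opProd {V : Type*} [AddCommGroup V] [Module ℂ V] {p : ℕ}
    (op : ℂ → Module.End ℂ V) (w : Fin p → ℂ) (s : Finset (Fin p)) : Module.End ℂ V :=
  ((s.sort (· ≤ ·)).map (fun i => op (w i))).prod

/-- The index subsets of a partition of `Fin p` into three parts. -/
def parts {p : ℕ} (σ : Fin p → Fin 3) (k : Fin 3) : Finset (Fin p) :=
  Finset.univ.filter (fun i => σ i = k)

/-!
Rescale so that, on the vacuum, `ν₁₁` acts as `ν₁₂` plus a scalar and `ν₂₁` acts as `ν₁₁` plus a
scalar. By the exchange relations, each of the passages `ν₁₂ → ν₁₁ → ν₂₁` then turns the vectors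
`s ↦ P(w̄_s)|0⟩` into their convolution with a multiplicative weight, twisted by the double
product `f`; since an exchange relation is symmetric, the passage back is the convolution with
the negated weight. Moving `ν₁₂(v̄)|0⟩` up to `ν₂₁`, merging it with `ν₂₁(ū)` and moving back down
expresses the multiple action by two iterated convolutions. The merging replaces a weight on `v̄`
by one on `w̄ = {ū, v̄}` carrying the factor `f(ū, w + c)`, which vanishes on `ū` and cancels
`f(w, ū)` on `v̄`. Expanding `det (1 + M)` in principal minors, which are Cauchy determinants,
identifies each iterated convolution with a modified Izergin determinant.
-/

section ModifiedBetheVectors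

variable {p : ℕ} {V : Type*} [AddCommGroup V] [Module ℂ V]

section RationalFunctions

variable (c : ℂ)

theorem fC_neg (x y : ℂ) : fC (-c) x y = fC c y x := by
  rw [fC, fC, ← neg_div_neg_eq]
  congr 1 <;> ring

theorem gC_neg (x y : ℂ) : gC (-c) x y = gC c y x := by
  rw [gC, gC, ← neg_div_neg_eq, neg_neg, neg_sub]

theorem gC_swap (x y : ℂ) : gC c x y = -gC c y x := by
  rw [gC, gC, ← div_neg, neg_sub]

variable {c}

theorem Generic.injective {ι : Type*} {w : ι → ℂ} (h : Generic c w) : Function.Injective w := by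
  intro i j hij
  by_contra hne
  exact (h i j hne).1 (sub_eq_zero.2 hij)

theorem Generic.pairwise_sub_ne {ι : Type*} {w : ι → ℂ} (h : Generic c w) :
    Pairwise fun i j => w i - w j ≠ c :=
  fun i j hij => (h i j hij).2.1

theorem fC_eq_one_add_gC {x y : ℂ} (h : x ≠ y) : fC c x y = 1 + gC c x y := by
  rw [fC, gC, add_div, div_self (sub_ne_zero.2 h)]

theorem fC_ne_zero {x y : ℂ} (h : x ≠ y) (h' : x - y ≠ -c) : fC c x y ≠ 0 :=
  div_ne_zero (fun e => h' (eq_neg_of_add_eq_zero_left e)) (sub_ne_zero.2 h)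

theorem gC_mul_gC {x y z : ℂ} (hxy : x ≠ y) (hxz : x ≠ z) (hyz : y ≠ z) :
    gC c x z * gC c y z = gC c x z * gC c y x + gC c y z * gC c x y := by
  have hxy' := sub_ne_zero.2 hxy
  have hyx' := sub_ne_zero.2 hxy.symm
  have hxz' := sub_ne_zero.2 hxz
  have hyz' := sub_ne_zero.2 hyz
  simp only [gC]
  field_simp
  ring

theorem gC_mul_fC {x y z : ℂ} (hxy : x ≠ y) (hxz : x ≠ z) (hyz : y ≠ z) :
    gC c x z * fC c x y = fC c z y * gC c x z + gC c y z * gC c x y := by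
  rw [fC_eq_one_add_gC hxy, fC_eq_one_add_gC hyz.symm, gC_swap c z y]
  linear_combination gC_mul_gC hxy hxz hyz + gC c x z * gC_swap c x y

theorem fC_mul_fC_add {x y : ℂ} (h : x ≠ y) (h' : y - x ≠ c) :
    fC c x y * fC c y (x + c) = 1 := by
  have h₁ := sub_ne_zero.2 h
  have h₂ : y - (x + c) ≠ 0 := fun e => h' (by linear_combination e)
  rw [fC, fC, div_mul_div_comm, div_eq_one_iff_eq (mul_ne_zero h₁ h₂)]
  ring

theorem prod_fC_eq_one_add_sum {ι : Type*} [DecidableEq ι] {y : ι → ℂ}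
    (hy : Function.Injective y) (T : Finset ι) {z : ℂ} (hz : ∀ i ∈ T, y i ≠ z) :
    ∏ i ∈ T, fC c (y i) z =
      1 + ∑ e ∈ T, gC c (y e) z * ∏ i ∈ T.erase e, fC c (y i) (y e) := by
  induction T using Finset.induction_on generalizing z with
  | empty => simp
  | insert b T hb ih =>
    obtain ⟨hbz, hTz⟩ := Finset.forall_mem_insert _ _ _ |>.1 hz
    have hbT : ∀ e ∈ T, e ≠ b := fun e he h => hb (h ▸ he)
    have hsum : ∑ e ∈ T, gC c (y e) z * ∏ i ∈ (insert b T).erase e, fC c (y i) (y e) =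
        ∑ e ∈ T, gC c (y e) z * (fC c (y b) (y e) * ∏ i ∈ T.erase e, fC c (y i) (y e)) := by
      refine Finset.sum_congr rfl fun e he => ?_
      rw [Finset.erase_insert_of_ne (hbT e he).symm, Finset.prod_insert (by simp [hb])]
    rw [Finset.prod_insert hb, Finset.sum_insert hb, Finset.erase_insert hb, hsum, ih hTz,
      ih fun e he => hy.ne (hbT e he), fC_eq_one_add_gC hbz, mul_add, mul_add, Finset.mul_sum,
      Finset.mul_sum, add_assoc, mul_one, mul_one, add_assoc, ← Finset.sum_add_distrib]
    congr 2
    refine Finset.sum_congr rfl fun e he => ?_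
    have hbe : y b ≠ y e := hy.ne (hbT e he).symm
    rw [fC_eq_one_add_gC hbe]
    linear_combination (∏ i ∈ T.erase e, fC c (y i) (y e)) * gC_mul_gC hbe hbz (hTz e he)

end RationalFunctions

section DoubleProducts

variable (c : ℂ) (w : Fin p → ℂ)

theorem fSS_neg (s t : Finset (Fin p)) : fSS (-c) w s t = fSS c w t s := by
  simp only [fSS, fC_neg]
  exact Finset.prod_comm

variable {s s' : Finset (Fin p)} (t : Finset (Fin p)) {i : Fin p}

theorem fSS_union_right (h : Disjoint s s') :
    fSS c w t (s ∪ s') = fSS c w t s * fSS c w t s' := by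
  simp only [fSS, Finset.prod_union h, Finset.prod_mul_distrib]

theorem fSS_union_left (h : Disjoint s s') :
    fSS c w (s ∪ s') t = fSS c w s t * fSS c w s' t :=
  Finset.prod_union h

theorem fSS_insert_right (hi : i ∉ s) :
    fSS c w t (insert i s) = (∏ j ∈ t, fC c (w j) (w i)) * fSS c w t s := by
  simp only [fSS, Finset.prod_insert hi, Finset.prod_mul_distrib]

theorem fSS_insert_left (hi : i ∉ s) :
    fSS c w (insert i s) t = (∏ j ∈ t, fC c (w i) (w j)) * fSS c w s t :=
  Finset.prod_insert hi

end DoubleProducts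

section OrderedProducts

variable {P : ℂ → Module.End ℂ V} (w : Fin p → ℂ)

@[simp]
theorem opProd_empty : opProd P w ∅ = 1 := by
  simp [opProd]

theorem opProd_insert (hP : ∀ x y, Commute (P x) (P y)) {i : Fin p} {s : Finset (Fin p)}
    (hi : i ∉ s) : opProd P w (insert i s) = P (w i) * opProd P w s := by
  have hperm : ((insert i s).sort (· ≤ ·)).Perm (i :: s.sort (· ≤ ·)) := by
    rw [List.perm_ext_iff_of_nodup (Finset.sort_nodup _ _)
      (List.nodup_cons.2 ⟨by simpa using hi, Finset.sort_nodup _ _⟩)]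
    simp
  rw [opProd, (hperm.map fun i => P (w i)).prod_eq', List.map_cons, List.prod_cons, opProd]
  exact List.pairwise_map.2 (List.pairwise_of_forall fun _ _ => hP _ _)

theorem opProd_union (hP : ∀ x y, Commute (P x) (P y)) {s t : Finset (Fin p)}
    (h : Disjoint s t) : opProd P w (s ∪ t) = opProd P w s * opProd P w t := by
  induction s using Finset.induction_on with
  | empty => simp
  | insert i s hi ih =>
    rw [Finset.disjoint_insert_left] at h
    rw [Finset.insert_union, opProd_insert w hP (by simp [hi, h.1]), opProd_insert w hP hi,
      ih h.2, mul_assoc]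

theorem opProd_map (hP : ∀ x y, Commute (P x) (P y)) {q : ℕ} (e : Fin q ↪ Fin p)
    (s : Finset (Fin q)) : opProd P w (s.map e) = opProd P (w ∘ e) s := by
  induction s using Finset.induction_on with
  | empty => simp
  | insert i s hi ih =>
    rw [Finset.map_insert, opProd_insert w hP (by simpa using hi), opProd_insert _ hP hi, ih,
      Function.comp_apply]

theorem commute_smul_apply (hP : ∀ x y, Commute (P x) (P y)) (r : ℂ) (x y : ℂ) :
    Commute ((r • P) x) ((r • P) y) :=
  ((hP x y).smul_left r).smul_right r

theorem opProd_smul (hP : ∀ x y, Commute (P x) (P y)) (r : ℂ) (s : Finset (Fin p)) :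
    opProd (r • P) w s = r ^ s.card • opProd P w s := by
  induction s using Finset.induction_on with
  | empty => simp
  | insert i s hi ih =>
    rw [opProd_insert w (commute_smul_apply hP r) hi, opProd_insert w hP hi, ih,
      Finset.card_insert_of_notMem hi, pow_succ', Pi.smul_apply, smul_mul_smul_comm]

end OrderedProducts

/-- The exchange relation `[P(x), Q(y)] = g(x,y) (Q(y) P(x) - Q(x) P(y))`: in the Yangian, two
entries in the same column of the monodromy matrix satisfy it with parameter `c`, two entries in
the same row with parameter `-c`. -/
def Exchange (c : ℂ) (P Q : ℂ → Module.End ℂ V) : Prop :=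
  ∀ x y, x ≠ y → P x * Q y - Q y * P x = gC c x y • (Q y * P x - Q x * P y)

namespace Exchange

variable {c : ℂ} {P Q : ℂ → Module.End ℂ V}

theorem of_row (h : ∀ x y, x ≠ y →
    Q x * P y - P y * Q x = gC c x y • (Q y * P x - Q x * P y)) : Exchange (-c) P Q := by
  intro x y hxy
  rw [← neg_sub (Q y * P x), h y x hxy.symm, gC_neg, ← smul_neg, neg_sub]

theorem symm (h : Exchange c P Q) : Exchange c Q P := by
  intro x y hxy
  have hyx : P y * Q x - Q x * P y = P x * Q y - Q y * P x := by
    rw [h x y hxy, h y x hxy.symm, gC_swap, neg_smul, ← smul_neg, neg_sub]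
  have hdiff : P y * Q x - P x * Q y = Q x * P y - Q y * P x := by
    linear_combination (norm := abel) hyx
  rw [hdiff, ← neg_sub, hyx, h x y hxy, ← smul_neg, neg_sub]

theorem smul (h : Exchange c P Q) (a b : ℂ) : Exchange c (a • P) (b • Q) := by
  intro x y hxy
  simp only [Pi.smul_apply, smul_mul_smul_comm, mul_comm b a, ← smul_sub, h x y hxy]
  exact smul_comm _ _ _

theorem sub_right (h : Exchange c Q P) (hP : ∀ x y, Commute (P x) (P y)) :
    Exchange c (Q - P) P := by
  intro x y hxy
  simp only [Pi.sub_apply, sub_mul, mul_sub, (hP x y).eq, sub_sub_sub_cancel_right, h x y hxy]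

theorem mul_eq (h : Exchange c Q P) {x y : ℂ} (hxy : x ≠ y) :
    Q x * P y = fC c x y • (P y * Q x) + gC c y x • (P x * Q y) := by
  rw [sub_eq_iff_eq_add.1 (h x y hxy), fC_eq_one_add_gC hxy, gC_swap c y x]
  module

variable {w : Fin p → ℂ}

theorem mul_opProd (h : Exchange c Q P) (hP : ∀ x y, Commute (P x) (P y))
    (hw : Function.Injective w) {i : Fin p} {s : Finset (Fin p)} (hi : i ∉ s) :
    Q (w i) * opProd P w s = (∏ j ∈ s, fC c (w i) (w j)) • (opProd P w s * Q (w i)) +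
      ∑ e ∈ s, (gC c (w e) (w i) * ∏ j ∈ s.erase e, fC c (w e) (w j)) •
        (opProd P w (insert i (s.erase e)) * Q (w e)) := by
  induction s using Finset.induction_on generalizing i with
  | empty => simp
  | insert b s hb ih =>
    obtain ⟨hib, his⟩ : i ≠ b ∧ i ∉ s := by simpa using hi
    have hterm : ∀ e ∈ s, (gC c (w e) (w i) * ∏ j ∈ (insert b s).erase e, fC c (w e) (w j)) •
          (opProd P w (insert i ((insert b s).erase e)) * Q (w e)) =
        fC c (w i) (w b) • (P (w b) * ((gC c (w e) (w i) * ∏ j ∈ s.erase e, fC c (w e) (w j)) •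
          (opProd P w (insert i (s.erase e)) * Q (w e)))) +
        gC c (w b) (w i) • (P (w i) * ((gC c (w e) (w b) * ∏ j ∈ s.erase e, fC c (w e) (w j)) •
          (opProd P w (insert b (s.erase e)) * Q (w e)))) := by
      intro e he
      have heb : e ≠ b := fun h => hb (h ▸ he)
      have hei : e ≠ i := fun h => his (h ▸ he)
      rw [Finset.erase_insert_of_ne heb.symm, Finset.prod_insert (by simp [hb]),
        opProd_insert w hP (i := i) (by simp [his, hib]),
        opProd_insert w hP (i := b) (by simp [hb]),
        opProd_insert w hP (i := i) (by simp [his])]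
      simp only [mul_smul_comm, smul_smul, ← mul_assoc, (hP (w b) (w i)).eq, ← add_smul]
      congr 1
      linear_combination (∏ j ∈ s.erase e, fC c (w e) (w j)) *
        gC_mul_fC (c := c) (hw.ne heb) (hw.ne hei) (hw.ne hib.symm)
    rw [opProd_insert w hP hb, ← mul_assoc, h.mul_eq (hw.ne hib), Finset.sum_insert hb,
      Finset.sum_congr rfl hterm, Finset.sum_add_distrib, Finset.erase_insert hb,
      Finset.prod_insert hb, add_mul, smul_mul_assoc, smul_mul_assoc, mul_assoc, mul_assoc,
      ih his, ih hb, opProd_insert w hP his, mul_add, mul_add, Finset.mul_sum, Finset.mul_sum,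
      smul_add, smul_add, Finset.smul_sum, Finset.smul_sum]
    simp only [mul_smul_comm, smul_smul, mul_assoc]
    abel

end Exchange

section SumsOverSubsets

variable {α N : Type*} [AddCommMonoid N]

theorem sum_subtype_finset (I : Finset α) (G : Finset α → N) :
    ∑ S : Finset I, G (S.map (Function.Embedding.subtype _)) = ∑ S ∈ I.powerset, G S := by
  classical
  exact Finset.sum_nbij' (fun S => S.map (Function.Embedding.subtype _))
    (fun T => T.subtype (· ∈ I))
    (fun S _ => Finset.mem_powerset.2 fun _ => Finset.property_of_mem_map_subtype S)
    (fun _ _ => Finset.mem_univ _) (fun S _ => by ext; simp)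
    (fun S hS => Finset.subtype_map_of_mem (Finset.mem_powerset.1 hS)) fun _ _ => rfl

variable [DecidableEq α]

theorem sum_powerset_sum_sdiff (s : Finset α) (G : Finset α → α → N) :
    ∑ T ∈ s.powerset, ∑ e ∈ s \ T, G T e = ∑ T ∈ s.powerset, ∑ e ∈ T, G (T.erase e) e := by
  rw [Finset.sum_sigma', Finset.sum_sigma']
  refine Finset.sum_bij' (fun x _ => ⟨insert x.2 x.1, x.2⟩) (fun x _ => ⟨x.1.erase x.2, x.2⟩)
    ?_ ?_ ?_ ?_ ?_ <;> rintro ⟨T, e⟩ h <;>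
    simp only [Finset.mem_sigma, Finset.mem_powerset, Finset.mem_sdiff] at h ⊢
  · exact ⟨Finset.insert_subset h.2.1 h.1, Finset.mem_insert_self _ _⟩
  · exact ⟨(Finset.erase_subset _ _).trans h.1, h.1 h.2, Finset.notMem_erase _ _⟩
  · rw [Finset.erase_insert h.2.2]
  · rw [Finset.insert_erase h.2]
  · rw [Finset.erase_insert h.2.2]

theorem sum_powerset_powerset_sdiff (s : Finset α) (G : Finset α → Finset α → N) :
    ∑ I ∈ s.powerset, ∑ J ∈ (s \ I).powerset, G I J =
      ∑ K ∈ s.powerset, ∑ I ∈ K.powerset, G I (K \ I) := by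
  rw [Finset.sum_sigma', Finset.sum_sigma']
  refine Finset.sum_bij' (fun x _ => ⟨x.1 ∪ x.2, x.1⟩) (fun x _ => ⟨x.2, x.1 \ x.2⟩)
    ?_ ?_ ?_ ?_ ?_ <;> rintro ⟨I, J⟩ h <;>
    simp only [Finset.mem_sigma, Finset.mem_powerset] at h ⊢
  · exact ⟨Finset.union_subset h.1 (h.2.trans Finset.sdiff_subset), Finset.subset_union_left⟩
  · exact ⟨h.2.trans h.1, Finset.sdiff_subset_sdiff h.1 subset_rfl⟩
  · rw [Finset.union_sdiff_cancel_left (Finset.disjoint_sdiff.mono_right h.2)]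
  · rw [Finset.union_sdiff_of_subset h.2]
  · rw [Finset.union_sdiff_cancel_left (Finset.disjoint_sdiff.mono_right h.2)]

theorem sum_powerset_sdiff_comm (s : Finset α) (G : Finset α → Finset α → N) :
    ∑ I ∈ s.powerset, ∑ J ∈ (s \ I).powerset, G I J =
      ∑ J ∈ s.powerset, ∑ I ∈ (s \ J).powerset, G I J :=
  Finset.sum_comm' fun I J => by
    simp only [Finset.mem_powerset, Finset.subset_sdiff, disjoint_comm (a := I)]
    tauto

theorem sum_parts (F : Finset (Fin p) → Finset (Fin p) → Finset (Fin p) → N) :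
    ∑ σ : Fin p → Fin 3, F (parts σ 0) (parts σ 1) (parts σ 2) =
      ∑ I ∈ Finset.univ.powerset, ∑ J ∈ (Finset.univ \ I).powerset,
        F I J ((Finset.univ \ I) \ J) := by
  rw [Finset.sum_sigma']
  refine Finset.sum_bij' (fun σ _ => ⟨parts σ 0, parts σ 1⟩)
    (fun x _ i => if i ∈ x.1 then 0 else if i ∈ x.2 then 1 else 2) ?_ ?_ ?_ ?_ ?_
  · intro σ _
    simp +contextual [parts, Finset.subset_iff]
  · simp
  · intro σ _
    funext i
    simp only [parts, Finset.mem_filter_univ]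
    generalize σ i = k
    fin_cases k <;> rfl
  · rintro ⟨I, J⟩ h
    have : ∀ x ∈ J, x ∉ I := fun x hx => by
      simpa using Finset.mem_powerset.1 (Finset.mem_sigma.1 h).2 hx
    congr 1 <;> ext x <;> simp only [parts, Finset.mem_filter_univ] <;> grind
  · intro σ _
    congr 1
    ext x
    simp only [parts, Finset.mem_filter_univ, Finset.mem_sdiff, Finset.mem_univ, true_and]
    generalize σ x = k
    fin_cases k <;> simp

end SumsOverSubsets

/-- The weight `T ↦ ∏_{i ∈ T} a i` on subtuples: the notation `λ(x̄) = ∏_i λ(x_i)`. -/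
def mulWeight (a : Fin p → ℂ) (T : Finset (Fin p)) : ℂ := ∏ i ∈ T, a i

/-- The convolution `(k ⋆ F)(s) = ∑_{s ⇒ {T, s \ T}} k(T) f(T, s \ T) F(s \ T)` of a scalar weight
`k` with a vector-valued function `F` of the subtuples of `w`, twisted by the double product `f`
taken with parameter `c`. Taking `F` scalar gives the product of weights. -/
def twistedConv (c : ℂ) (w : Fin p → ℂ) (k : Finset (Fin p) → ℂ) (F : Finset (Fin p) → V)
    (s : Finset (Fin p)) : V :=
  ∑ T ∈ s.powerset, (k T * fSS c w T (s \ T)) • F (s \ T)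

section TwistedConvolution

variable (c : ℂ) (w : Fin p → ℂ)

theorem mulWeight_insert (a : Fin p → ℂ) {i : Fin p} {T : Finset (Fin p)} (hi : i ∉ T) :
    mulWeight a (insert i T) = a i * mulWeight a T :=
  Finset.prod_insert hi

theorem mulWeight_mul (a b : Fin p → ℂ) (T : Finset (Fin p)) :
    mulWeight (a * b) T = mulWeight a T * mulWeight b T :=
  Finset.prod_mul_distrib

theorem mulWeight_mul_sdiff (a : Fin p → ℂ) {S T : Finset (Fin p)} (h : S ⊆ T) :
    mulWeight a S * mulWeight a (T \ S) = mulWeight a T := by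
  rw [mul_comm]
  exact Finset.prod_sdiff h

theorem twistedConv_assoc (k l : Finset (Fin p) → ℂ) (F : Finset (Fin p) → V) :
    twistedConv c w k (twistedConv c w l F) = twistedConv c w (twistedConv c w k l) F := by
  funext s
  simp only [twistedConv, Finset.smul_sum, Finset.sum_mul, Finset.sum_smul, smul_smul, smul_eq_mul]
  rw [sum_powerset_powerset_sdiff s fun I J =>
    (k I * fSS c w I (s \ I) * (l J * fSS c w J ((s \ I) \ J))) • F ((s \ I) \ J)]
  refine Finset.sum_congr rfl fun K hK => Finset.sum_congr rfl fun I hI => ?_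
  rw [Finset.mem_powerset] at hK hI
  have hsI : s \ I = (K \ I) ∪ (s \ K) := by
    rw [Finset.union_comm, Finset.sdiff_union_sdiff_cancel hK hI]
  have hsK : (s \ I) \ (K \ I) = s \ K := by
    rw [sdiff_sdiff_left, Finset.sup_eq_union, Finset.union_sdiff_of_subset hI]
  have hK' : fSS c w K (s \ K) = fSS c w I (s \ K) * fSS c w (K \ I) (s \ K) := by
    rw [← fSS_union_left c w _ Finset.disjoint_sdiff, Finset.union_sdiff_of_subset hI]
  rw [hsK, hsI, fSS_union_right c w _ (Finset.disjoint_sdiff.mono_left Finset.sdiff_subset), hK']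
  congr 1
  ring

theorem twistedConv_neg_comm (k l : Finset (Fin p) → ℂ) (F : Finset (Fin p) → V) :
    twistedConv c w k (twistedConv (-c) w l F) = twistedConv (-c) w l (twistedConv c w k F) := by
  funext s
  simp only [twistedConv, Finset.smul_sum, smul_smul, fSS_neg]
  rw [sum_powerset_sdiff_comm s]
  refine Finset.sum_congr rfl fun J hJ => Finset.sum_congr rfl fun I hI => ?_
  rw [Finset.mem_powerset] at hJ hI
  obtain ⟨hI, hIJ⟩ := Finset.subset_sdiff.1 hI
  have hsI : s \ I = J ∪ ((s \ I) \ J) :=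
    (Finset.union_sdiff_of_subset (Finset.subset_sdiff.2 ⟨hJ, hIJ.symm⟩)).symm
  have hsJ : s \ J = I ∪ ((s \ I) \ J) := by
    rw [sdiff_sdiff_comm, Finset.union_sdiff_of_subset (Finset.subset_sdiff.2 ⟨hI, hIJ⟩)]
  rw [sdiff_sdiff_comm (a := s) (b := J), hsJ, fSS_union_left c w _
    (Finset.disjoint_sdiff.mono_right Finset.sdiff_subset)]
  nth_rw 1 [hsI]
  rw [fSS_union_right c w _ Finset.disjoint_sdiff]
  congr 1
  ring

theorem mulWeight_mul_fSS_insert (a : Fin p → ℂ) (U : Finset (Fin p)) {i : Fin p}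
    {T : Finset (Fin p)} (hi : i ∉ T) :
    mulWeight a (insert i T) * fSS c w (insert i T) U =
      mulWeight a T * fSS c w T U * (a i * ∏ j ∈ U, fC c (w i) (w j)) := by
  rw [mulWeight_insert a hi, fSS_insert_left c w U hi]
  ring

theorem mulWeight_erase_mul_fSS (a : Fin p → ℂ) {e : Fin p} {T U : Finset (Fin p)} (hT : e ∈ T)
    (hU : e ∉ U) :
    mulWeight a (T.erase e) * fSS c w (T.erase e) (insert e U) *
        (a e * ∏ j ∈ U, fC c (w e) (w j)) =
      mulWeight a T * fSS c w T U * ∏ j ∈ T.erase e, fC c (w j) (w e) := by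
  have hinsert := mulWeight_mul_fSS_insert c w a U (Finset.notMem_erase e T)
  rw [Finset.insert_erase hT] at hinsert
  rw [fSS_insert_right c w _ hU, hinsert]
  ring

variable {w}

theorem fSS_insert_right_eq_add_sum (hw : Function.Injective w) {i : Fin p} {T U : Finset (Fin p)}
    (hT : i ∉ T) (hU : i ∉ U) :
    fSS c w T (insert i U) = fSS c w T U +
      ∑ e ∈ T, fSS c w T U * (gC c (w e) (w i) * ∏ j ∈ T.erase e, fC c (w j) (w e)) := by
  have hT' : ∀ e ∈ T, w e ≠ w i := fun e he h => hT (hw h ▸ he)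
  rw [fSS_insert_right c w T hU, prod_fC_eq_one_add_sum hw T hT', ← Finset.mul_sum]
  ring

theorem twistedConv_mulWeight_insert (hw : Function.Injective w) (a : Fin p → ℂ)
    (F : Finset (Fin p) → V) {i : Fin p} {s : Finset (Fin p)} (hi : i ∉ s) :
    twistedConv c w (mulWeight a) F (insert i s) =
      ∑ T ∈ s.powerset, (mulWeight a T * fSS c w T (s \ T)) •
        (F (insert i (s \ T)) + ((a i * ∏ j ∈ s \ T, fC c (w i) (w j)) • F (s \ T) +
          ∑ e ∈ s \ T, (a e * (gC c (w e) (w i) * ∏ j ∈ (s \ T).erase e, fC c (w e) (w j))) •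
            F (insert i ((s \ T).erase e)))) := by
  have hiT : ∀ T ∈ s.powerset, i ∉ T := fun T hT h => hi (Finset.mem_powerset.1 hT h)
  have hreindex : ∀ T ∈ s.powerset, ∀ e ∈ T,
      (mulWeight a (T.erase e) * fSS c w (T.erase e) (s \ T.erase e) * (a e *
        (gC c (w e) (w i) * ∏ j ∈ (s \ T.erase e).erase e, fC c (w e) (w j)))) •
          F (insert i ((s \ T.erase e).erase e)) =
      (mulWeight a T * (fSS c w T (s \ T) * (gC c (w e) (w i) *
        ∏ j ∈ T.erase e, fC c (w j) (w e)))) • F (insert i (s \ T)) := by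
    intro T hT e he
    rw [Finset.sdiff_erase (Finset.mem_powerset.1 hT he), Finset.erase_insert (by simp [he])]
    congr 1
    linear_combination gC c (w e) (w i) *
      mulWeight_erase_mul_fSS c w a (U := s \ T) he (by simp [he])
  have hmem : ∀ T ∈ s.powerset, (mulWeight a (insert i T) *
      fSS c w (insert i T) (insert i s \ insert i T)) • F (insert i s \ insert i T) =
      (mulWeight a T * fSS c w T (s \ T) * (a i * ∏ j ∈ s \ T, fC c (w i) (w j))) •
        F (s \ T) := by
    intro T hT
    rw [Finset.insert_sdiff_insert, Finset.sdiff_insert_of_notMem hi,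
      mulWeight_mul_fSS_insert c w a _ (hiT T hT)]
  have hnotMem : ∀ T ∈ s.powerset,
      (mulWeight a T * fSS c w T (insert i s \ T)) • F (insert i s \ T) =
      (mulWeight a T * fSS c w T (s \ T)) • F (insert i (s \ T)) +
        ∑ e ∈ T, (mulWeight a T * (fSS c w T (s \ T) * (gC c (w e) (w i) *
          ∏ j ∈ T.erase e, fC c (w j) (w e)))) • F (insert i (s \ T)) := by
    intro T hT
    rw [Finset.insert_sdiff_of_notMem _ (hiT T hT),
      fSS_insert_right_eq_add_sum c hw (hiT T hT) (by simp [hi]), mul_add, Finset.mul_sum,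
      add_smul, Finset.sum_smul]
  rw [twistedConv, Finset.sum_powerset_insert hi, Finset.sum_congr rfl hmem,
    Finset.sum_congr rfl hnotMem]
  simp only [smul_add, Finset.smul_sum, smul_smul, Finset.sum_add_distrib]
  rw [sum_powerset_sum_sdiff s fun T e => (mulWeight a T * fSS c w T (s \ T) * (a e *
      (gC c (w e) (w i) * ∏ j ∈ (s \ T).erase e, fC c (w e) (w j)))) •
        F (insert i ((s \ T).erase e)),
    Finset.sum_congr rfl fun T hT => Finset.sum_congr rfl (hreindex T hT), add_right_comm,
    add_assoc]

variable (w)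

theorem twistedConv_union (a φ : Fin p → ℂ) (F : Finset (Fin p) → V) {S T : Finset (Fin p)}
    (hST : Disjoint S T) (hS : ∀ j ∈ S, φ j = 0)
    (hT : ∀ j ∈ T, φ j * ∏ i ∈ S, fC c (w j) (w i) = 1) :
    twistedConv c w (mulWeight (a * φ)) F (S ∪ T) =
      twistedConv c w (mulWeight a) (fun s => F (S ∪ s)) T := by
  refine (Finset.sum_subset (Finset.powerset_mono.2 Finset.subset_union_right) ?_).symm.trans
    (Finset.sum_congr rfl ?_)
  · intro R hR hRT
    obtain ⟨j, hjR, hjT⟩ := Finset.not_subset.1 (mt Finset.mem_powerset.2 hRT)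
    have hjS : j ∈ S :=
      (Finset.mem_union.1 (Finset.mem_powerset.1 hR hjR)).resolve_right hjT
    rw [mulWeight_mul, mulWeight, mulWeight, Finset.prod_eq_zero (f := φ) hjR (hS j hjS), mul_zero,
      zero_mul, zero_smul]
  · intro R hR
    rw [Finset.mem_powerset] at hR
    have hcancel : mulWeight φ R * fSS c w R S = 1 := by
      rw [mulWeight, fSS, ← Finset.prod_mul_distrib]
      exact Finset.prod_eq_one fun j hj => hT j (hR hj)
    rw [Finset.union_sdiff_distrib, Finset.sdiff_eq_self_of_disjoint (hST.mono_right hR),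
      fSS_union_right c w _ (hST.mono_right Finset.sdiff_subset), mulWeight_mul]
    congr 1
    linear_combination mulWeight a R * fSS c w R (T \ R) * hcancel

end TwistedConvolution

/-- The vector-valued function `s ↦ P(w̄_s) x` of the subtuples of `w`; for `P = ν₁₂` and `x = |0⟩`
its values are the modified Bethe vectors. -/
def opVector (P : ℂ → Module.End ℂ V) (w : Fin p → ℂ) (x : V) (s : Finset (Fin p)) : V :=
  opProd P w s x

theorem opProd_apply_opVector {P : ℂ → Module.End ℂ V} (hP : ∀ x y, Commute (P x) (P y))
    (w : Fin p → ℂ) (x : V) {s t : Finset (Fin p)} (h : Disjoint s t) :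
    opProd P w s (opVector P w x t) = opVector P w x (s ∪ t) := by
  rw [opVector, opVector, opProd_union w hP h, Module.End.mul_apply]

theorem map_twistedConv (c : ℂ) (w : Fin p → ℂ) (L : Module.End ℂ V) (k : Finset (Fin p) → ℂ)
    (F : Finset (Fin p) → V) (s : Finset (Fin p)) :
    L (twistedConv c w k F s) = twistedConv c w k (fun t => L (F t)) s := by
  simp only [twistedConv, map_sum, map_smul]

theorem twistedConv_congr (c : ℂ) (w : Fin p → ℂ) (k : Finset (Fin p) → ℂ)
    {F G : Finset (Fin p) → V} {s : Finset (Fin p)} (h : ∀ t ⊆ s, F t = G t) :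
    twistedConv c w k F s = twistedConv c w k G s :=
  Finset.sum_congr rfl fun T _ => by rw [h _ Finset.sdiff_subset]

theorem Exchange.opVector_eq_twistedConv {c : ℂ} {P Q : ℂ → Module.End ℂ V} {w : Fin p → ℂ}
    {x : V} {μ : ℂ → ℂ} (h : Exchange c Q P) (hP : ∀ x y, Commute (P x) (P y))
    (hQ : ∀ x y, Commute (Q x) (Q y)) (hw : Function.Injective w)
    (hx : ∀ z, Q z x = μ z • x + P z x) :
    opVector Q w x = twistedConv c w (mulWeight (μ ∘ w)) (opVector P w x) := by
  have hD : ∀ z, (Q - P) z x = μ z • x := fun z => by simp [hx]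
  have hQD : ∀ z y, Q z y = P z y + (Q - P) z y := fun z y => by simp
  funext s
  induction s using Finset.induction_on with
  | empty => simp [opVector, twistedConv, mulWeight, fSS]
  | insert i s hi ih =>
    rw [opVector, opProd_insert w hQ hi, Module.End.mul_apply, ← opVector, ih,
      twistedConv_mulWeight_insert c hw _ _ hi, map_twistedConv, twistedConv]
    refine Finset.sum_congr rfl fun T _ => ?_
    have hiT : i ∉ s \ T := by simp [hi]
    rw [hQD, opVector, ← Module.End.mul_apply ((Q - P) (w i)),
      (h.sub_right hP).mul_opProd hP hw hiT, ← Module.End.mul_apply, ← opProd_insert w hP hiT]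
    simp only [LinearMap.add_apply, LinearMap.smul_apply, LinearMap.sum_apply,
      Module.End.mul_apply, hD, map_smul, smul_smul, mul_comm _ (μ (w _)), opVector,
      Function.comp_apply]

section PrincipalMinors

variable {α R : Type*} [DecidableEq α] [CommRing R]

theorem det_one_add_eq_sum_det_submatrix [Fintype α] (M : Matrix α α R) :
    (1 + M).det = ∑ S : Finset α, (M.submatrix (Subtype.val : S → α) Subtype.val).det := by
  rw [add_comm]
  refine (Matrix.detRowAlternating.map_add_univ M.row (1 : Matrix α α R).row).trans ?_
  exact Finset.sum_congr rfl fun S _ => Matrix.det_piecewise_one_eq_submatrix_det M S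

theorem det_one_add_submatrix_eq_sum (M : Matrix α α R) (I : Finset α) :
    (1 + M.submatrix (Subtype.val : I → α) Subtype.val).det =
      ∑ T ∈ I.powerset, (M.submatrix (Subtype.val : T → α) Subtype.val).det := by
  rw [det_one_add_eq_sum_det_submatrix, ← sum_subtype_finset]
  refine Finset.sum_congr rfl fun S _ => ?_
  rw [← Matrix.det_submatrix_equiv_self (Finset.equivMap (Function.Embedding.subtype _) S)]
  rfl

end PrincipalMinors

section CauchyDeterminant

variable {c : ℂ}

theorem inv_hC_sub_mul (hc : c ≠ 0) {x y z : ℂ} (hxz : x - z ≠ -c)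
    (hzy : z - y ≠ -c) (hxy : x - y ≠ -c) :
    (hC c x y)⁻¹ - (hC c x z)⁻¹ * (hC c z y)⁻¹ =
      (fC c x z)⁻¹ * ((fC c z y)⁻¹ * (hC c x y)⁻¹) := by
  have h₁ : x - z + c ≠ 0 := fun h => hxz (eq_neg_of_add_eq_zero_left h)
  have h₂ : z - y + c ≠ 0 := fun h => hzy (eq_neg_of_add_eq_zero_left h)
  have h₃ : x - y + c ≠ 0 := fun h => hxy (eq_neg_of_add_eq_zero_left h)
  simp only [hC, fC, inv_div]
  field_simp
  ring

variable {α : Type*} [DecidableEq α] {y : α → ℂ}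

theorem det_inv_hC_insert (hc : c ≠ 0) (hyc : ∀ i j, y i - y j ≠ -c) {a : α} {S : Finset α}
    (ha : a ∉ S) :
    (Matrix.of fun j k : ↥(insert a S) => (hC c (y j) (y k))⁻¹).det =
      (∏ i : S, (fC c (y i) (y a))⁻¹) * ((∏ i : S, (fC c (y a) (y i))⁻¹) *
        (Matrix.of fun j k : S => (hC c (y j) (y k))⁻¹).det) := by
  let e : Unit ⊕ S ≃ ↥(insert a S) := (Equiv.sumComm Unit S).trans
    ((Equiv.optionEquivSumPUnit S).symm.trans (Finset.subtypeInsertEquivOption ha).symm)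
  have hblocks : (Matrix.of fun j k : ↥(insert a S) => (hC c (y j) (y k))⁻¹).submatrix e e =
      Matrix.fromBlocks 1 (Matrix.of fun (_ : Unit) (k : S) => (hC c (y a) (y k))⁻¹)
        (Matrix.of fun (j : S) (_ : Unit) => (hC c (y j) (y a))⁻¹)
        (Matrix.of fun j k : S => (hC c (y j) (y k))⁻¹) := by
    ext (i | i) (j | j) <;> simp [e, Finset.subtypeInsertEquivOption, hC, hc]
  rw [← Matrix.det_submatrix_equiv_self e, hblocks, Matrix.det_fromBlocks_one₁₁,
    ← Matrix.det_mul_row, ← Matrix.det_mul_column]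
  congr 1
  ext i j
  simpa [Matrix.mul_apply] using inv_hC_sub_mul hc (hyc i a) (hyc a j) (hyc i j)

theorem det_inv_hC_mul_prod_fC (hc : c ≠ 0) (hy : Function.Injective y)
    (hyc : ∀ i j, y i - y j ≠ -c) (S : Finset α) :
    (Matrix.of fun j k : S => (hC c (y j) (y k))⁻¹).det *
      ∏ j ∈ S, ∏ k ∈ S.erase j, fC c (y j) (y k) = 1 := by
  induction S using Finset.induction_on with
  | empty => simp
  | insert a S ha ih =>
    have hne : ∀ k ∈ S, k ≠ a := fun k hk h => ha (h ▸ hk)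
    have hprod : ∏ j ∈ S, ∏ k ∈ (insert a S).erase j, fC c (y j) (y k) =
        (∏ j ∈ S, fC c (y j) (y a)) * ∏ j ∈ S, ∏ k ∈ S.erase j, fC c (y j) (y k) := by
      rw [← Finset.prod_mul_distrib]
      refine Finset.prod_congr rfl fun j hj => ?_
      rw [Finset.erase_insert_of_ne (hne j hj).symm, Finset.prod_insert (by simp [ha])]
    have hleft : ∏ j ∈ S, fC c (y j) (y a) ≠ 0 :=
      Finset.prod_ne_zero_iff.2 fun j hj => fC_ne_zero (hy.ne (hne j hj)) (hyc _ _)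
    have hright : ∏ j ∈ S, fC c (y a) (y j) ≠ 0 :=
      Finset.prod_ne_zero_iff.2 fun j hj => fC_ne_zero (hy.ne (hne j hj).symm) (hyc _ _)
    rw [det_inv_hC_insert hc hyc ha, Finset.prod_insert ha, Finset.erase_insert ha, hprod,
      Finset.prod_inv_distrib, Finset.prod_inv_distrib,
      Finset.prod_coe_sort S fun j => fC c (y j) (y a),
      Finset.prod_coe_sort S fun j => fC c (y a) (y j)]
    rw [← ih]
    field_simp

end CauchyDeterminant

/-- The product `f(ū, z + c)`, the factor through which a modified Izergin determinant depends on
its first tuple `ū`. -/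
def shiftFactor {ι : Type*} [Fintype ι] (c : ℂ) (u : ι → ℂ) (z : ℂ) : ℂ :=
  ∏ i, fC c (u i) (z + c)

/-- The matrix, with row factors `φ`, whose principal block on `I` is the part of the modified
Izergin matrix of the subtuple `w̄_I` other than `-z δ_{jk}`. It is indexed by the whole tuple so
that all its principal minors live in one matrix. -/
def izerginMatrix (c : ℂ) (w φ : Fin p → ℂ) (I : Finset (Fin p)) : Matrix (Fin p) (Fin p) ℂ :=
  Matrix.of fun j k => φ j * (∏ i ∈ I.erase j, fC c (w j) (w i)) / hC c (w j) (w k)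

section IzerginDeterminant

variable {c : ℂ} {w : Fin p → ℂ} {ι : Type*} [Fintype ι]

theorem shiftFactor_self (u : ι → ℂ) (i : ι) : shiftFactor c u (u i) = 0 :=
  Finset.prod_eq_zero (Finset.mem_univ i) (by simp [fC])

theorem shiftFactor_mul_prod_fC {u : ι → ℂ} {z : ℂ} (h : ∀ i, u i ≠ z) (h' : ∀ i, u i - z ≠ c) :
    shiftFactor c u z * ∏ i, fC c z (u i) = 1 := by
  rw [shiftFactor, ← Finset.prod_mul_distrib]
  exact Finset.prod_eq_one fun i _ => by rw [mul_comm, fC_mul_fC_add (h i).symm (h' i)]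

theorem det_izerginMatrix_submatrix (hc : c ≠ 0) (hw : Function.Injective w)
    (hwc : ∀ i j, w i - w j ≠ -c) (φ : Fin p → ℂ) {T I : Finset (Fin p)} (h : T ⊆ I) :
    ((izerginMatrix c w φ I).submatrix (Subtype.val : T → Fin p) Subtype.val).det =
      mulWeight φ T * fSS c w T (I \ T) := by
  have hmatrix : (izerginMatrix c w φ I).submatrix (Subtype.val : T → Fin p) Subtype.val =
      Matrix.of fun j k : T => (φ j * ∏ i ∈ I.erase j, fC c (w j) (w i)) *
        (Matrix.of fun j k : T => (hC c (w j) (w k))⁻¹) j k := by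
    ext j k
    simp [izerginMatrix, div_eq_mul_inv]
  have hprod : ∏ j ∈ T, (φ j * ∏ i ∈ I.erase j, fC c (w j) (w i)) =
      mulWeight φ T * (fSS c w T (I \ T) * ∏ j ∈ T, ∏ k ∈ T.erase j, fC c (w j) (w k)) := by
    rw [mulWeight, fSS, ← Finset.prod_mul_distrib, ← Finset.prod_mul_distrib]
    refine Finset.prod_congr rfl fun j hj => ?_
    have hI : I.erase j = I \ T ∪ T.erase j := by grind
    rw [hI, Finset.prod_union (Finset.sdiff_disjoint.mono_right (Finset.erase_subset _ _))]
  rw [hmatrix, Matrix.det_mul_column,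
    Finset.prod_coe_sort T fun j => φ j * ∏ i ∈ I.erase j, fC c (w j) (w i), hprod]
  linear_combination mulWeight φ T * fSS c w T (I \ T) * det_inv_hC_mul_prod_fC hc hw hwc T

theorem neg_one_pow_mul_KIz_restr (u : ι → ℂ) (I : Finset (Fin p)) :
    (-1) ^ I.card * KIz c 1 u (fun i => restr w I i + c) =
      (1 + (izerginMatrix c w (-(shiftFactor c u ∘ w)) I).submatrix
        (Subtype.val : I → Fin p) Subtype.val).det := by
  rw [KIz, ← Fintype.card_coe I, ← Matrix.det_neg]
  congr 1
  ext j k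
  have hprod : ∏ i ∈ Finset.univ.erase j, fC c (w j + c) (w i + c) =
      ∏ i ∈ I.erase j, fC c (w j) (w i) := by
    simp only [fC, add_sub_add_right_eq_sub]
    exact Finset.prod_erase_attach (fun i => (w j - w i + c) / (w j - w i)) j
  have hhC : hC c (w j + c) (w k + c) = hC c (w j) (w k) := by
    rw [hC, hC, add_sub_add_right_eq_sub]
  simp only [Matrix.neg_apply, Matrix.of_apply, restr, hprod, hhC, Matrix.add_apply,
    Matrix.one_apply, Matrix.submatrix_apply, izerginMatrix, shiftFactor, Pi.neg_apply,
    Function.comp_apply]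
  ring

theorem KIz_restr_eq_twistedConv (hc : c ≠ 0) (hw : Function.Injective w)
    (hwc : ∀ i j, w i - w j ≠ -c) (u : ι → ℂ) (μ : Fin p → ℂ) (I : Finset (Fin p)) :
    (-1) ^ I.card * mulWeight μ I * KIz c 1 u (fun i => restr w I i + c) =
      twistedConv c w (mulWeight (-μ * shiftFactor c u ∘ w)) (mulWeight μ) I := by
  rw [mul_right_comm, neg_one_pow_mul_KIz_restr, det_one_add_submatrix_eq_sum, Finset.sum_mul,
    twistedConv]
  refine Finset.sum_congr rfl fun T hT => ?_
  rw [Finset.mem_powerset] at hT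
  rw [det_izerginMatrix_submatrix hc hw hwc _ hT, neg_mul_comm, mulWeight_mul,
    ← mulWeight_mul_sdiff μ hT, smul_eq_mul]
  ring

end IzerginDeterminant

section MultipleAction

variable {c : ℂ} {A B C : ℂ → Module.End ℂ V} {w : Fin p → ℂ} {x : V} {μ₁ μ₂ : ℂ → ℂ}

theorem opProd_apply_opVector_eq_twistedConv (hA : ∀ y z, Commute (A y) (A z))
    (hB : ∀ y z, Commute (B y) (B z)) (hC : ∀ y z, Commute (C y) (C z))
    (hAB : Exchange (-c) A B) (hCA : Exchange c C A) (hw : Function.Injective w)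
    (hAx : ∀ z, A z x = μ₁ z • x + B z x) (hCx : ∀ z, C z x = μ₂ z • x + A z x)
    {S T : Finset (Fin p)} (hST : Disjoint S T) {φ ψ : Fin p → ℂ}
    (hφS : ∀ j ∈ S, φ j = 0) (hφT : ∀ j ∈ T, φ j * ∏ i ∈ S, fC c (w j) (w i) = 1)
    (hψS : ∀ j ∈ S, ψ j = 0) (hψT : ∀ j ∈ T, ψ j * ∏ i ∈ S, fC (-c) (w j) (w i) = 1) :
    opProd C w S (opVector B w x T) =
      twistedConv c w (twistedConv c w (mulWeight (-(μ₂ ∘ w) * φ)) (mulWeight (μ₂ ∘ w)))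
        (twistedConv (-c) w (twistedConv (-c) w (mulWeight (-(μ₁ ∘ w) * ψ)) (mulWeight (μ₁ ∘ w)))
          (opVector B w x)) (S ∪ T) := by
  have hBA : opVector B w x = twistedConv (-c) w (mulWeight (-(μ₁ ∘ w))) (opVector A w x) :=
    hAB.symm.opVector_eq_twistedConv hA hB hw (μ := -μ₁) fun z => by simp [hAx]
  have hAC : opVector A w x = twistedConv c w (mulWeight (-(μ₂ ∘ w))) (opVector C w x) :=
    hCA.symm.opVector_eq_twistedConv hC hA hw (μ := -μ₂) fun z => by simp [hCx]
  calc opProd C w S (opVector B w x T)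
      = twistedConv (-c) w (mulWeight (-(μ₁ ∘ w))) (fun s => twistedConv c w
          (mulWeight (-(μ₂ ∘ w))) (fun t => opVector C w x (S ∪ t)) s) T := by
        rw [hBA, hAC, map_twistedConv]
        refine twistedConv_congr _ w _ fun s hs => ?_
        rw [map_twistedConv]
        exact twistedConv_congr _ w _ fun t ht =>
          opProd_apply_opVector hC w x (hST.mono_right (ht.trans hs))
    _ = twistedConv (-c) w (mulWeight (-(μ₁ ∘ w) * ψ))
          (twistedConv c w (mulWeight (-(μ₂ ∘ w) * φ)) (opVector C w x)) (S ∪ T) := by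
        rw [twistedConv_union (-c) w _ ψ _ hST hψS hψT]
        exact twistedConv_congr _ w _ fun s hs => (twistedConv_union c w _ φ _
          (hST.mono_right hs) hφS fun j hj => hφT j (hs hj)).symm
    _ = _ := by
        rw [hCA.opVector_eq_twistedConv hA hC hw hCx, hAB.opVector_eq_twistedConv hB hA hw hAx,
          twistedConv_assoc c, twistedConv_neg_comm, twistedConv_neg_comm, twistedConv_assoc (-c)]

theorem twistedConv_twistedConv_neg_univ (c : ℂ) (w : Fin p → ℂ) (k l : Finset (Fin p) → ℂ)
    (F : Finset (Fin p) → V) :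
    twistedConv c w k (twistedConv (-c) w l F) Finset.univ =
      ∑ σ : Fin p → Fin 3, (k (parts σ 0) * l (parts σ 1) * fSS c w (parts σ 0) (parts σ 1) *
        fSS c w (parts σ 0) (parts σ 2) * fSS c w (parts σ 2) (parts σ 1)) • F (parts σ 2) := by
  rw [sum_parts fun I J E => (k I * l J * fSS c w I J * fSS c w I E * fSS c w E J) • F E]
  simp only [twistedConv, Finset.smul_sum, smul_smul, fSS_neg]
  refine Finset.sum_congr rfl fun I _ => Finset.sum_congr rfl fun J hJ => ?_
  have hI : fSS c w I (Finset.univ \ I) = fSS c w I J * fSS c w I ((Finset.univ \ I) \ J) := by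
    rw [← fSS_union_right c w I Finset.disjoint_sdiff,
      Finset.union_sdiff_of_subset (Finset.mem_powerset.1 hJ)]
  rw [hI]
  congr 1
  ring

theorem neg_zpow_mul_prod {β : ℂ} (hβ : β ≠ 0) (n : ℕ) (lam : ℂ → ℂ) (w : Fin p → ℂ)
    (I : Finset (Fin p)) :
    (-β) ^ ((n : ℤ) - (I.card : ℤ)) * ∏ i ∈ I, lam (w i) =
      (-β) ^ n * ((-1) ^ I.card * mulWeight ((β⁻¹ • lam) ∘ w) I) := by
  have hμ : mulWeight ((β⁻¹ • lam) ∘ w) I = β⁻¹ ^ I.card * ∏ i ∈ I, lam (w i) := by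
    simp [mulWeight, Finset.prod_mul_distrib]
  rw [hμ, zpow_sub₀ (neg_ne_zero.2 hβ), zpow_natCast, zpow_natCast, div_eq_mul_inv, ← inv_pow,
    inv_neg, neg_pow β⁻¹]
  ring

end MultipleAction

section TwoTuples

theorem disjoint_map_castAddEmb_natAddEmb (n m : ℕ) :
    Disjoint ((Finset.univ : Finset (Fin n)).map (Fin.castAddEmb m))
      ((Finset.univ : Finset (Fin m)).map (Fin.natAddEmb n)) := by
  simp only [Finset.disjoint_left, Finset.mem_map, Finset.mem_univ, true_and]
  rintro _ ⟨i, rfl⟩ ⟨j, hj⟩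
  rw [Fin.ext_iff, Fin.natAddEmb_apply, Fin.castAddEmb_apply, Fin.val_natAdd, Fin.val_castAdd] at hj
  omega

theorem map_castAddEmb_union_map_natAddEmb (n m : ℕ) :
    (Finset.univ : Finset (Fin n)).map (Fin.castAddEmb m) ∪
      (Finset.univ : Finset (Fin m)).map (Fin.natAddEmb n) = Finset.univ := by
  refine Finset.eq_univ_of_forall fun i => ?_
  refine i.addCases (fun i => ?_) fun j => ?_ <;> simp

variable {P : ℂ → Module.End ℂ V} {n m : ℕ} (u : Fin n → ℂ) (v : Fin m → ℂ)

theorem opProd_append_map_castAddEmb (hP : ∀ x y, Commute (P x) (P y)) :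
    opProd P (Fin.append u v) (Finset.univ.map (Fin.castAddEmb m)) = opProd P u Finset.univ := by
  rw [opProd_map _ hP]
  congr 1
  funext i
  exact Fin.append_left u v i

theorem opProd_append_map_natAddEmb (hP : ∀ x y, Commute (P x) (P y)) :
    opProd P (Fin.append u v) (Finset.univ.map (Fin.natAddEmb n)) = opProd P v Finset.univ := by
  rw [opProd_map _ hP]
  congr 1
  funext i
  exact Fin.append_right u v i

theorem shiftFactor_append_of_mem_left (c : ℂ) {j : Fin (n + m)}
    (hj : j ∈ Finset.univ.map (Fin.castAddEmb m)) : shiftFactor c u (Fin.append u v j) = 0 := by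
  obtain ⟨i, -, rfl⟩ := Finset.mem_map.1 hj
  rw [Fin.coe_castAddEmb, Fin.append_left, shiftFactor_self]

theorem shiftFactor_append_of_mem_right {c : ℂ} (hw : Function.Injective (Fin.append u v))
    (hwc : ∀ i j, Fin.append u v i - Fin.append u v j ≠ c) {j : Fin (n + m)}
    (hj : j ∈ Finset.univ.map (Fin.natAddEmb n)) :
    shiftFactor c u (Fin.append u v j) *
      ∏ i ∈ Finset.univ.map (Fin.castAddEmb m), fC c (Fin.append u v j) (Fin.append u v i) = 1 := by
  obtain ⟨k, -, rfl⟩ := Finset.mem_map.1 hj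
  have happ : ∀ i, Fin.append u v (Fin.castAddEmb m i) = u i := Fin.append_left u v
  simp only [Finset.prod_map, happ]
  refine shiftFactor_mul_prod_fC (fun i => ?_) fun i => ?_ <;> rw [← happ i]
  · exact hw.ne fun h => Finset.disjoint_left.1 (disjoint_map_castAddEmb_natAddEmb n m)
      (Finset.mem_map_of_mem _ (Finset.mem_univ i)) (h ▸ hj)
  · exact hwc _ _

theorem opProd_mul_opProd_apply_eq_sum {c : ℂ} (hc : c ≠ 0) {A B C : ℂ → Module.End ℂ V}
    (hA : ∀ y z, Commute (A y) (A z)) (hB : ∀ y z, Commute (B y) (B z))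
    (hC : ∀ y z, Commute (C y) (C z)) (hAB : Exchange (-c) A B) (hCA : Exchange c C A)
    {x : V} {μ₁ μ₂ : ℂ → ℂ} (hAx : ∀ z, A z x = μ₁ z • x + B z x)
    (hCx : ∀ z, C z x = μ₂ z • x + A z x) (hw : Function.Injective (Fin.append u v))
    (hwc : ∀ i j, Fin.append u v i - Fin.append u v j ≠ c) :
    (opProd C u Finset.univ * opProd B v Finset.univ) x =
      ∑ σ : Fin (n + m) → Fin 3,
        ((-1) ^ (parts σ 0).card * mulWeight (μ₂ ∘ Fin.append u v) (parts σ 0) *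
            KIz c 1 u (fun i => restr (Fin.append u v) (parts σ 0) i + c) *
            ((-1) ^ (parts σ 1).card * mulWeight (μ₁ ∘ Fin.append u v) (parts σ 1) *
              KIzBar c 1 u (fun i => restr (Fin.append u v) (parts σ 1) i - c)) *
            fSS c (Fin.append u v) (parts σ 0) (parts σ 1) *
            fSS c (Fin.append u v) (parts σ 0) (parts σ 2) *
            fSS c (Fin.append u v) (parts σ 2) (parts σ 1)) •
          opProd B (Fin.append u v) (parts σ 2) x := by
  have hwc' : ∀ i j, Fin.append u v i - Fin.append u v j ≠ -c := fun i j h =>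
    hwc j i (by rw [← neg_sub, h, neg_neg])
  have hwc'' : ∀ i j, Fin.append u v i - Fin.append u v j ≠ - -c := by simpa using hwc
  rw [Module.End.mul_apply, ← opProd_append_map_castAddEmb u v hC,
    ← opProd_append_map_natAddEmb u v hB, ← opVector.eq_1 B,
    opProd_apply_opVector_eq_twistedConv hA hB hC hAB hCA hw hAx hCx
      (disjoint_map_castAddEmb_natAddEmb n m)
      (fun j hj => shiftFactor_append_of_mem_left u v c hj)
      (fun j hj => shiftFactor_append_of_mem_right u v hw hwc hj)
      (fun j hj => shiftFactor_append_of_mem_left u v (-c) hj)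
      (fun j hj => shiftFactor_append_of_mem_right u v hw hwc' hj),
    map_castAddEmb_union_map_natAddEmb, twistedConv_twistedConv_neg_univ]
  simp only [KIzBar, sub_eq_add_neg]
  refine Finset.sum_congr rfl fun σ _ => ?_
  rw [KIz_restr_eq_twistedConv hc hw hwc',
    KIz_restr_eq_twistedConv (neg_ne_zero.2 hc) hw hwc'']
  rfl

end TwoTuples

theorem stmt4_general {c : ℂ} (hc : c ≠ 0) {β₁ β₂ : ℂ} (hβ₁ : β₁ ≠ 0) (hβ₂ : β₂ ≠ 0)
    {A B C : ℂ → Module.End ℂ V} (hA : ∀ x y, Commute (A x) (A y))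
    (hB : ∀ x y, Commute (B x) (B y)) (hC : ∀ x y, Commute (C x) (C y))
    (hAB : Exchange (-c) A B) (hCA : Exchange c C A) {vac : V} {lam₁ lam₂ : ℂ → ℂ}
    (hAvac : ∀ x, A x vac = lam₁ x • vac + β₂ • B x vac)
    (hCvac : ∀ x, C x vac = (β₁ * lam₁ x + β₂ * lam₂ x) • vac + (β₁ * β₂) • B x vac)
    {n m : ℕ} (u : Fin n → ℂ) (v : Fin m → ℂ) (hw : Function.Injective (Fin.append u v))
    (hwc : Pairwise fun i j => Fin.append u v i - Fin.append u v j ≠ c) :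
    (opProd C u Finset.univ * opProd B v Finset.univ) vac
      = ∑ σ : Fin (n + m) → Fin 3,
          ((-β₁) ^ ((n : ℤ) - ((parts σ 0).card : ℤ)) *
              (-β₂) ^ ((n : ℤ) - ((parts σ 1).card : ℤ)) *
              (∏ i ∈ parts σ 0, lam₂ (Fin.append u v i)) *
              (∏ i ∈ parts σ 1, lam₁ (Fin.append u v i)) *
              KIz c 1 u (fun i => restr (Fin.append u v) (parts σ 0) i + c) *
              KIzBar c 1 u (fun i => restr (Fin.append u v) (parts σ 1) i - c) *
              fSS c (Fin.append u v) (parts σ 0) (parts σ 1) *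
              fSS c (Fin.append u v) (parts σ 0) (parts σ 2) *
              fSS c (Fin.append u v) (parts σ 2) (parts σ 1)) •
            (opProd B (Fin.append u v) (parts σ 2) vac) := by
  have hAvac' : ∀ x, (β₂⁻¹ • A) x vac = (β₂⁻¹ • lam₁) x • vac + B x vac := fun x => by
    simp [hAvac, smul_smul, hβ₂]
  have hCvac' : ∀ x, ((β₁ * β₂)⁻¹ • C) x vac = (β₁⁻¹ • lam₂) x • vac + (β₂⁻¹ • A) x vac := by
    intro x
    simp only [Pi.smul_apply, LinearMap.smul_apply, hAvac, hCvac, smul_add, smul_smul,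
      ← add_assoc, ← add_smul, smul_eq_mul]
    congr 2 <;> field_simp
    ring
  have hwc' : ∀ i j, Fin.append u v i - Fin.append u v j ≠ c := fun i j => by
    rcases eq_or_ne i j with rfl | hij
    · simpa using hc.symm
    · exact hwc hij
  have hAB' : Exchange (-c) (β₂⁻¹ • A) B := by simpa using hAB.smul β₂⁻¹ 1
  have hCscale : opProd C u Finset.univ =
      (β₁ * β₂) ^ n • opProd ((β₁ * β₂)⁻¹ • C) u Finset.univ := by
    rw [opProd_smul u hC, Finset.card_fin, smul_smul, ← mul_pow,
      mul_inv_cancel₀ (mul_ne_zero hβ₁ hβ₂), one_pow, one_smul]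
  rw [hCscale, smul_mul_assoc, LinearMap.smul_apply, opProd_mul_opProd_apply_eq_sum u v hc
    (commute_smul_apply hA _) hB (commute_smul_apply hC _) hAB' (hCA.smul _ _) hAvac' hCvac' hw
    hwc', Finset.smul_sum]
  refine Finset.sum_congr rfl fun σ _ => ?_
  have hcoeff : (-β₁) ^ ((n : ℤ) - ((parts σ 0).card : ℤ)) *
      (-β₂) ^ ((n : ℤ) - ((parts σ 1).card : ℤ)) * (∏ i ∈ parts σ 0, lam₂ (Fin.append u v i)) *
      (∏ i ∈ parts σ 1, lam₁ (Fin.append u v i)) = (β₁ * β₂) ^ n *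
        ((-1) ^ (parts σ 0).card * mulWeight ((β₁⁻¹ • lam₂) ∘ Fin.append u v) (parts σ 0) *
        ((-1) ^ (parts σ 1).card * mulWeight ((β₂⁻¹ • lam₁) ∘ Fin.append u v) (parts σ 1))) := by
    rw [mul_assoc, mul_mul_mul_comm, neg_zpow_mul_prod hβ₁, neg_zpow_mul_prod hβ₂,
      mul_mul_mul_comm, ← mul_pow, neg_mul_neg]
  rw [smul_smul, hcoeff]
  congr 1
  ring

end ModifiedBetheVectors

/-- Multiple action of the modified operator `ν₂₁` on a modified Bethe vector:
a sum over partitions of the combined tuple into three subtuples. -/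
theorem stmt4
    (c : ℂ) (hc : c ≠ 0) (β1 β2 : ℂ) (hβ1 : β1 ≠ 0) (hβ2 : β2 ≠ 0)
    (V : Type*) [AddCommGroup V] [Module ℂ V]
    (N : Fin 2 → Fin 2 → ℂ → Module.End ℂ V)
    (vac : V) (lam1 lam2 : ℂ → ℂ)
    (hYang : ∀ (i j k l : Fin 2) (x y : ℂ), x ≠ y →
      N i j x * N k l y - N k l y * N i j x
        = gC c x y • (N k j y * N i l x - N k j x * N i l y))
    (hCommSame : ∀ (i j : Fin 2) (x y : ℂ), N i j x * N i j y = N i j y * N i j x)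
    (hvac11 : ∀ x : ℂ, N 0 0 x vac = lam1 x • vac + β2 • (N 0 1 x vac))
    (hvac22 : ∀ x : ℂ, N 1 1 x vac = lam2 x • vac + β1 • (N 0 1 x vac))
    (hvac21 : ∀ x : ℂ, N 1 0 x vac
      = (β1 * lam1 x + β2 * lam2 x) • vac + (β1 * β2) • (N 0 1 x vac))
    (n m : ℕ) (u : Fin n → ℂ) (v : Fin m → ℂ)
    (hgen : Generic c (Fin.append u v)) :
    (opProd (N 1 0) u Finset.univ * opProd (N 0 1) v Finset.univ) vac
      = ∑ σ : Fin (n + m) → Fin 3,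
          ((-β1) ^ ((n : ℤ) - ((parts σ 0).card : ℤ)) *
              (-β2) ^ ((n : ℤ) - ((parts σ 1).card : ℤ)) *
              (∏ i ∈ parts σ 0, lam2 (Fin.append u v i)) *
              (∏ i ∈ parts σ 1, lam1 (Fin.append u v i)) *
              KIz c 1 u (fun i => restr (Fin.append u v) (parts σ 0) i + c) *
              KIzBar c 1 u (fun i => restr (Fin.append u v) (parts σ 1) i - c) *
              fSS c (Fin.append u v) (parts σ 0) (parts σ 1) *
              fSS c (Fin.append u v) (parts σ 0) (parts σ 2) *
              fSS c (Fin.append u v) (parts σ 2) (parts σ 1)) •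
            (opProd (N 0 1) (Fin.append u v) (parts σ 2) vac) := by
  exact stmt4_general hc hβ1 hβ2 (hCommSame 0 0) (hCommSame 0 1) (hCommSame 1 0)
    (.of_row (hYang 0 1 0 0)) (hYang 1 0 0 0) hvac11 hvac21 u v hgen.injective
    hgen.pairwise_sub_ne
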